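/- Let r > 0, α > 1, γ = (α−1)/r, ω ∈ ℝ, 0 ≤ φ < 1 and τ > 0. Define for real y ≥ 0 and λ > 0 the score s(y, λ) = γλ·(ψ(γλ+y) + ψ(γλ+α) − ψ(γλ+y+α+r) − ψ(γλ)) and the updating function g(y, λ) = exp(ω + φ·log λ + τ·s(y, λ)). Then for every λ ≥ exp((ω − τ(α+r+1))/(1−φ)) and every real y ≥ 0, the partial derivative of g with respect to y satisfies |∂g(y, λ)/∂y| ≤ τ·γ⁻¹·(α+r+1)·exp(τ(2α+r+2)). -/

import Mathlib

noncomputable def digamma (x : ℝ) : ℝ := deriv (fun t => Real.log (Real.Gamma t)) x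

noncomputable def bnbScore (r a lam y : ℝ) : ℝ :=
  ((a - 1) / r) * lam *
    (digamma (((a - 1) / r) * lam + y) + digamma (((a - 1) / r) * lam + a) -
      digamma (((a - 1) / r) * lam + y + a + r) - digamma (((a - 1) / r) * lam))

noncomputable def gasUpdate (r a om ph ta y lam : ℝ) : ℝ :=
  Real.exp (om + ph * Real.log lam + ta * bnbScore r a lam y)

open Filter Topology

theorem hasDerivAt_log_Gamma {x : ℝ} (hx : 0 < x) :
    HasDerivAt (fun t => Real.log (Real.Gamma t)) (digamma x) x := by
  have hΓ : DifferentiableAt ℝ Real.Gamma x := Real.differentiableAt_Gamma fun m => by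
    have : (0 : ℝ) ≤ m := m.cast_nonneg
    linarith
  exact (hΓ.log (Real.Gamma_pos_of_pos hx).ne').hasDerivAt

theorem digamma_add_one {x : ℝ} (hx : 0 < x) : digamma (x + 1) = digamma x + 1 / x := by
  have h₁ : HasDerivAt (fun t => Real.log (Real.Gamma (t + 1))) (digamma (x + 1)) x :=
    (hasDerivAt_log_Gamma (by linarith : 0 < x + 1)).comp_add_const x 1
  have h₂ : HasDerivAt (fun t => Real.log (Real.Gamma t) + Real.log t) (digamma x + 1 / x) x := by
    rw [one_div]
    exact (hasDerivAt_log_Gamma hx).add (Real.hasDerivAt_log hx.ne')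
  refine h₁.unique (h₂.congr_of_eventuallyEq ?_)
  filter_upwards [lt_mem_nhds hx] with t ht
  rw [Real.Gamma_add_one ht.ne', Real.log_mul ht.ne' (Real.Gamma_pos_of_pos ht).ne', add_comm]

theorem digamma_add_natCast {x : ℝ} (hx : 0 < x) (n : ℕ) :
    digamma (x + n) = digamma x + ∑ k ∈ Finset.range n, 1 / (x + k) := by
  induction n with
  | zero => simp
  | succ n ih =>
    rw [Finset.sum_range_succ, Nat.cast_succ, ← add_assoc, digamma_add_one (by positivity), ih,
      add_assoc]

theorem monotoneOn_digamma : MonotoneOn digamma (Set.Ioi 0) :=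
  Real.convexOn_log_Gamma.monotoneOn_deriv
    fun _ hx => (hasDerivAt_log_Gamma hx).differentiableAt

theorem tendsto_digamma_add_sub_digamma {x b : ℝ} (hx : 0 < x) (hb : 0 ≤ b) :
    Tendsto (fun n : ℕ => digamma (x + n + b) - digamma (x + n)) atTop (𝓝 0) := by
  have hlim : Tendsto (fun n : ℕ => (⌈b⌉₊ : ℝ) / (x + n)) atTop (𝓝 0) :=
    tendsto_const_nhds.div_atTop (tendsto_atTop_add_const_left _ _ tendsto_natCast_atTop_atTop)
  refine squeeze_zero (fun n => ?_) (fun n => ?_) hlim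
  · have hn : 0 < x + n := by positivity
    exact sub_nonneg.2 (monotoneOn_digamma hn (by simp only [Set.mem_Ioi]; positivity)
      (by linarith))
  · have hn : 0 < x + n := by positivity
    have hmono : digamma (x + n + b) ≤ digamma (x + n + ⌈b⌉₊) :=
      monotoneOn_digamma (by simp only [Set.mem_Ioi]; positivity)
        (by simp only [Set.mem_Ioi]; positivity) (by linarith [Nat.le_ceil b])
    have hsum : ∑ k ∈ Finset.range ⌈b⌉₊, 1 / (x + n + k) ≤ ⌈b⌉₊ / (x + n) := by
      calc ∑ k ∈ Finset.range ⌈b⌉₊, 1 / (x + n + k)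
          ≤ ∑ _k ∈ Finset.range ⌈b⌉₊, 1 / (x + n) :=
            Finset.sum_le_sum fun k _ =>
              one_div_le_one_div_of_le hn (le_add_of_nonneg_right k.cast_nonneg)
        _ = ⌈b⌉₊ / (x + n) := by
            rw [Finset.sum_const, Finset.card_range, nsmul_eq_mul, mul_one_div]
    rw [digamma_add_natCast hn] at hmono
    linarith

theorem tendsto_sum_digamma_sub {x b : ℝ} (hx : 0 < x) (hb : 0 ≤ b) :
    Tendsto (fun n : ℕ => ∑ k ∈ Finset.range n, (1 / (x + k) - 1 / (x + b + k))) atTop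
      (𝓝 (digamma (x + b) - digamma x)) := by
  have h := (tendsto_digamma_add_sub_digamma hx hb).const_sub (digamma (x + b) - digamma x)
  rw [sub_zero] at h
  refine h.congr fun n => ?_
  rw [Finset.sum_sub_distrib, show x + n + b = x + b + n by ring,
    digamma_add_natCast hx, digamma_add_natCast (by positivity : 0 < x + b)]
  ring

theorem digamma_add_sub_digamma_le {x b : ℝ} (hx : 0 < x) (hb : 1 ≤ b) :
    digamma (x + b) - digamma x ≤ b / x := by
  refine le_of_tendsto' (tendsto_sum_digamma_sub hx (by linarith)) fun n => ?_
  calc ∑ k ∈ Finset.range n, (1 / (x + k) - 1 / (x + b + k))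
      ≤ ∑ k ∈ Finset.range n, (b / (x + k) - b / (x + (k + 1 : ℕ))) := by
        refine Finset.sum_le_sum fun k _ => ?_
        have hk : 0 < x + k := by positivity
        have e₁ : 1 / (x + k) - 1 / (x + b + k) = b / ((x + k) * (x + b + k)) := by
          have : 0 < x + b + k := by linarith
          field_simp
          ring
        have e₂ : b / (x + k) - b / (x + (k + 1 : ℕ)) = b / ((x + k) * (x + 1 + k)) := by
          have : 0 < x + 1 + k := by linarith
          rw [show x + ((k + 1 : ℕ) : ℝ) = x + 1 + k by push_cast; ring]
          field_simp
          ring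
        rw [e₁, e₂]
        gcongr
    _ = b / x - b / (x + n) := by
        rw [Finset.sum_range_sub' (fun k : ℕ => b / (x + k))]
        simp
    _ ≤ b / x := sub_le_self _ (by positivity)

theorem one_div_second_difference {t b h : ℝ} (ht : 0 < t) (hb : 0 ≤ b) (hh : 0 ≤ h) :
    (1 / t - 1 / (t + b)) - (1 / (t + h) - 1 / (t + h + b)) =
      h * b * (1 / (t * (t + h) * (t + h + b)) + 1 / (t * (t + b) * (t + h + b))) := by
  have : 0 < t + b := by linarith
  have : 0 < t + h := by linarith
  have : 0 < t + h + b := by linarith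
  field_simp
  ring

theorem one_div_second_difference_le {t b h : ℝ} (ht : 0 < t) (hb : 1 ≤ b) (hh : 0 ≤ h) :
    (1 / t - 1 / (t + b)) - (1 / (t + h) - 1 / (t + h + b)) ≤
      h * b / t ^ 2 - h * b / (t + 1) ^ 2 := by
  have e : h * b / t ^ 2 - h * b / (t + 1) ^ 2 =
      h * b * (1 / (t * t * (t + 1)) + 1 / (t * (t + 1) * (t + 1))) := by
    field_simp
    ring
  rw [one_div_second_difference ht (by linarith) hh, e]
  gcongr <;> linarith

theorem tendsto_sum_digamma_second_difference {z b h : ℝ} (hz : 0 < z) (hb : 0 ≤ b)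
    (hh : 0 ≤ h) :
    Tendsto (fun n : ℕ => ∑ k ∈ Finset.range n,
        ((1 / (z + k) - 1 / (z + k + b)) - (1 / (z + k + h) - 1 / (z + k + h + b)))) atTop
      (𝓝 ((digamma (z + b) - digamma z) - (digamma (z + h + b) - digamma (z + h)))) := by
  refine ((tendsto_sum_digamma_sub hz hb).sub
    (tendsto_sum_digamma_sub (by positivity : 0 < z + h) hb)).congr fun n => ?_
  rw [← Finset.sum_sub_distrib]
  simp only [add_right_comm z _ (Nat.cast _), add_right_comm (z + h) _ (Nat.cast _)]

theorem digamma_second_difference_nonneg {z b h : ℝ} (hz : 0 < z) (hb : 0 ≤ b) (hh : 0 ≤ h) :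
    0 ≤ (digamma (z + b) - digamma z) - (digamma (z + h + b) - digamma (z + h)) := by
  refine ge_of_tendsto' (tendsto_sum_digamma_second_difference hz hb hh) fun n =>
    Finset.sum_nonneg fun k _ => ?_
  rw [one_div_second_difference (by positivity) hb hh]
  positivity

theorem digamma_second_difference_le {z b h : ℝ} (hz : 0 < z) (hb : 1 ≤ b) (hh : 0 ≤ h) :
    (digamma (z + b) - digamma z) - (digamma (z + h + b) - digamma (z + h)) ≤
      h * b / z ^ 2 := by
  refine le_of_tendsto' (tendsto_sum_digamma_second_difference hz (by linarith) hh) fun n => ?_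
  calc ∑ k ∈ Finset.range n,
        ((1 / (z + k) - 1 / (z + k + b)) - (1 / (z + k + h) - 1 / (z + k + h + b)))
      ≤ ∑ k ∈ Finset.range n, (h * b / (z + k) ^ 2 - h * b / (z + (k + 1 : ℕ)) ^ 2) := by
        refine Finset.sum_le_sum fun k _ => ?_
        rw [Nat.cast_succ, ← add_assoc]
        exact one_div_second_difference_le (by positivity) hb hh
    _ = h * b / z ^ 2 - h * b / (z + n) ^ 2 := by
        rw [Finset.sum_range_sub' (fun k : ℕ => h * b / (z + k) ^ 2)]
        simp
    _ ≤ h * b / z ^ 2 := sub_le_self _ (by positivity)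

theorem bnbScore_le {r a lam y : ℝ} (hr : 0 < r) (ha : 1 < a) (hlam : 0 < lam) (hy : 0 ≤ y) :
    bnbScore r a lam y ≤ a := by
  have hx : 0 < (a - 1) / r * lam := mul_pos (div_pos (by linarith) hr) hlam
  unfold bnbScore
  set x := (a - 1) / r * lam
  have hmono : digamma (x + y) ≤ digamma (x + y + a + r) :=
    monotoneOn_digamma (by simp only [Set.mem_Ioi]; linarith)
      (by simp only [Set.mem_Ioi]; linarith) (by linarith)
  calc x * (digamma (x + y) + digamma (x + a) - digamma (x + y + a + r) - digamma x)
      ≤ x * (a / x) := by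
        gcongr
        linarith [digamma_add_sub_digamma_le hx ha.le]
    _ = a := by field_simp

theorem bnbScore_increment_mem {r a lam y h : ℝ} (hr : 0 < r) (ha : 1 < a) (hlam : 0 < lam)
    (hy : 0 ≤ y) (hh : 0 ≤ h) :
    bnbScore r a lam (y + h) - bnbScore r a lam y ∈
      Set.Icc 0 (h * ((a + r) / ((a - 1) / r * lam))) := by
  have hx : 0 < (a - 1) / r * lam := mul_pos (div_pos (by linarith) hr) hlam
  unfold bnbScore
  set x := (a - 1) / r * lam
  have hz : 0 < x + y := by positivity
  have e : x * (digamma (x + (y + h)) + digamma (x + a) - digamma (x + (y + h) + a + r) -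
        digamma x) - x * (digamma (x + y) + digamma (x + a) - digamma (x + y + a + r) - digamma x)
      = x * ((digamma (x + y + (a + r)) - digamma (x + y)) -
        (digamma (x + y + h + (a + r)) - digamma (x + y + h))) := by
    simp only [← add_assoc]
    ring
  rw [e]
  refine ⟨mul_nonneg hx.le (digamma_second_difference_nonneg hz (by linarith) hh), ?_⟩
  calc _ ≤ x * (h * (a + r) / (x + y) ^ 2) := by
        gcongr
        exact digamma_second_difference_le hz (by linarith) hh
    _ ≤ x * (h * (a + r) / x ^ 2) := by
        gcongr
        linarith
    _ = h * ((a + r) / x) := by field_simp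

theorem abs_deriv_bnbScore_le {r a lam y : ℝ} (hr : 0 < r) (ha : 1 < a) (hlam : 0 < lam)
    (hy : 0 ≤ y) : |deriv (bnbScore r a lam) y| ≤ (a + r) / ((a - 1) / r * lam) := by
  have hC : 0 ≤ (a + r) / ((a - 1) / r * lam) :=
    div_nonneg (by linarith) (mul_pos (div_pos (by linarith) hr) hlam).le
  by_cases hd : DifferentiableAt ℝ (bnbScore r a lam) y
  · have hslope := hd.hasDerivAt.tendsto_slope_zero_right.abs
    refine le_of_tendsto hslope ?_
    filter_upwards [self_mem_nhdsWithin] with h (hh : 0 < h)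
    obtain ⟨h₀, h₁⟩ := bnbScore_increment_mem hr ha hlam hy hh.le
    rw [smul_eq_mul, abs_of_nonneg (by positivity), inv_mul_le_iff₀ hh]
    exact h₁
  · rwa [deriv_zero_of_not_differentiableAt hd, abs_zero]

theorem abs_deriv_gasUpdate_le {r a om ph ta lam y : ℝ} (hta : 0 < ta) :
    |deriv (fun y' => gasUpdate r a om ph ta y' lam) y| ≤
      gasUpdate r a om ph ta y lam * (ta * |deriv (bnbScore r a lam) y|) := by
  by_cases hd : DifferentiableAt ℝ (bnbScore r a lam) y
  · have h : HasDerivAt (fun y' => gasUpdate r a om ph ta y' lam)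
        (gasUpdate r a om ph ta y lam * (ta * deriv (bnbScore r a lam) y)) y :=
      ((hd.hasDerivAt.const_mul ta).const_add (om + ph * Real.log lam)).exp
    rw [h.deriv, abs_mul, abs_mul, abs_of_pos hta, gasUpdate, Real.abs_exp]
  · have hg : ¬ DifferentiableAt ℝ (fun y' => gasUpdate r a om ph ta y' lam) y := by
      refine fun hg => hd ?_
      have hlog := ((hg.log (Real.exp_pos _).ne').sub_const
        (om + ph * Real.log lam)).const_mul ta⁻¹
      refine hlog.congr_of_eventuallyEq (.of_forall fun t => ?_)
      simp only [gasUpdate, Real.log_exp]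
      field_simp
      ring
    rw [deriv_zero_of_not_differentiableAt hg, abs_zero]
    unfold gasUpdate
    positivity

theorem gasUpdate_le {r a om ph ta lam y : ℝ} (hr : 0 < r) (ha : 1 < a) (hph1 : ph < 1)
    (hta : 0 < ta) (hlam : Real.exp ((om - ta * (a + r + 1)) / (1 - ph)) ≤ lam) (hy : 0 ≤ y) :
    gasUpdate r a om ph ta y lam ≤ lam * Real.exp (ta * (2 * a + r + 2)) := by
  have hpos : 0 < lam := (Real.exp_pos _).trans_le hlam
  have hlog := (Real.le_log_iff_exp_le hpos).2 hlam
  rw [div_le_iff₀ (by linarith)] at hlog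
  have hs := mul_le_mul_of_nonneg_left (bnbScore_le hr ha hpos hy) hta.le
  calc gasUpdate r a om ph ta y lam
      ≤ Real.exp (Real.log lam + ta * (2 * a + r + 2)) := by
        unfold gasUpdate
        exact Real.exp_le_exp.2 (by linarith)
    _ = lam * Real.exp (ta * (2 * a + r + 2)) := by rw [Real.exp_add, Real.exp_log hpos]

theorem gas_deriv_y_bound (r a om ph ta : ℝ) (hr : 0 < r) (ha : 1 < a)
    (hph0 : 0 ≤ ph) (hph1 : ph < 1) (hta : 0 < ta) :
    ∀ lam : ℝ, Real.exp ((om - ta * (a + r + 1)) / (1 - ph)) ≤ lam → ∀ y : ℝ, 0 ≤ y →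
      |deriv (fun y' => gasUpdate r a om ph ta y' lam) y| ≤
        ta * ((a - 1) / r)⁻¹ * (a + r + 1) * Real.exp (ta * (2 * a + r + 2)) := by
  intro lam hlam y hy
  have hpos : 0 < lam := (Real.exp_pos _).trans_le hlam
  have hg : 0 < (a - 1) / r := div_pos (by linarith) hr
  calc |deriv (fun y' => gasUpdate r a om ph ta y' lam) y|
      ≤ gasUpdate r a om ph ta y lam * (ta * |deriv (bnbScore r a lam) y|) :=
        abs_deriv_gasUpdate_le hta
    _ ≤ (lam * Real.exp (ta * (2 * a + r + 2))) * (ta * ((a + r) / ((a - 1) / r * lam))) := by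
        gcongr
        · exact gasUpdate_le hr ha hph1 hta hlam hy
        · exact abs_deriv_bnbScore_le hr ha hpos hy
    _ = ta * ((a - 1) / r)⁻¹ * (a + r) * Real.exp (ta * (2 * a + r + 2)) := by
        generalize (a - 1) / r = g at hg
        field_simp
    _ ≤ ta * ((a - 1) / r)⁻¹ * (a + r + 1) * Real.exp (ta * (2 * a + r + 2)) := by
        gcongr ta * ((a - 1) / r)⁻¹ * ?_ * _
        linarith
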